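/- arXiv:2509.08168 — 2 statements merged into one kernel-verified Lean document; each statement's English description precedes it below -/
import Mathlib

section
/- Let ξ₁ = (1,0), ξ₂ = (0,1), ξ₃ = (1,1), ξ₄ = (1,−1) in ℝ². Every 2×2 real symmetric matrix R with |R − I| < 1/8 (operator or Frobenius norm) can be written as R = ∑_{k=1}^{4} c_k (ξ_k/|ξ_k|) ⊗ (ξ_k/|ξ_k|) with coefficients c_k ≥ 0 depending smoothly on R. -/
/-!
Since `ξ₃ ⊗ ξ₃ / 2` and `ξ₄ ⊗ ξ₄ / 2` have diagonal entries `1/2` and off-diagonal entries `± 1/2`,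
the decomposition amounts to `c₃ - c₄ = 2 R₀₁`, `c₁ + (c₃ + c₄)/2 = R₀₀` and
`c₂ + (c₃ + c₄)/2 = R₁₁`. Fixing the free parameter by `c₃ + c₄ = 1` gives coefficients affine in
`R`, hence smooth; they equal `1/2` at the identity and are nonnegative as long as each entry of
`R - I` is at most `1/2` in absolute value.
-/

/-- The four directions of the Nash decomposition. -/
def nashDir : Fin 4 → Fin 2 → ℝ :=
  ![![1, 0], ![0, 1], ![1, 1], ![1, -1]]

/-- Nash decomposition: there are coefficient functions `c_k`, depending smoothly on the
matrix, such that every symmetric `2×2` matrix `R` with `|R − I| < 1/8` (Frobenius norm)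
satisfies `c_k(R) ≥ 0` and `R = ∑_k c_k(R) (ξ_k/|ξ_k|) ⊗ (ξ_k/|ξ_k|)`. -/
theorem stmt15 :
    ∃ c : (Fin 2 → Fin 2 → ℝ) → Fin 4 → ℝ,
      (∀ k, ContDiff ℝ (⊤ : ℕ∞) fun R => c R k) ∧
      ∀ R : Fin 2 → Fin 2 → ℝ,
        (∀ i j, R i j = R j i) →
        Real.sqrt (∑ i, ∑ j, (R i j - if i = j then 1 else 0) ^ 2) < 1 / 8 →
        (∀ k, 0 ≤ c R k) ∧
        (∀ i j, R i j = ∑ k : Fin 4,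
          c R k * (nashDir k i / Real.sqrt ((nashDir k 0) ^ 2 + (nashDir k 1) ^ 2)) *
            (nashDir k j / Real.sqrt ((nashDir k 0) ^ 2 + (nashDir k 1) ^ 2))) := by
  refine ⟨fun R => ![R 0 0 - 1 / 2, R 1 1 - 1 / 2, 1 / 2 + R 0 1, 1 / 2 - R 0 1], ?_, ?_⟩
  · intro k
    fin_cases k <;> simp <;> fun_prop
  · intro R hsymm hR
    have h10 : R 1 0 = R 0 1 := hsymm 1 0
    rw [Real.sqrt_lt' (by norm_num)] at hR
    simp [Fin.sum_univ_two, h10] at hR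
    have h2 : Real.sqrt 2 ^ 2 = 2 := Real.sq_sqrt (by norm_num)
    have h2' : (Real.sqrt 2)⁻¹ * (Real.sqrt 2)⁻¹ = 1 / 2 := by
      rw [← mul_inv, ← sq, h2]; norm_num
    constructor
    · intro k
      fin_cases k <;> simp <;>
        nlinarith [sq_nonneg (R 0 0 - 1), sq_nonneg (R 1 1 - 1), sq_nonneg (R 0 1)]
    · intro i j
      fin_cases i <;> fin_cases j <;>
        simp [Fin.sum_univ_four, nashDir, h10, one_add_one_eq_two, div_eq_mul_inv, mul_assoc,
          h2'] <;> ring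
end

section
/- For every N ∈ ℕ and dimension n, there exist constants such that: for all ε ∈ (0,1], x̄ ∈ ℝ^n, and every prescribed vector of moments m = (m_α)_{|α| ≤ N}, there exists a smooth function L ∈ C_c^∞(B(x̄, ε)) with ∫_{ℝ^n} x^α L(x) dx = m_α for all multi-indices |α| ≤ N, and ‖L‖_{L^∞} ≤ p_N(|x̄|) ε^{-(n+N)} max_{|α|≤N} |m_α|, where p_N is a polynomial of degree N depending only on N and n. -/
/-!
The proof reduces to the unit ball. The Gram matrix of the monomials of degree at most `N`, taken
in `L²` weighted by a bump function `φ` supported in the unit ball, is invertible: a vector in its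
kernel gives a polynomial `P` with `∫ P² φ = 0`, so `P` vanishes on an open set and is zero.
Inverting it yields test functions `ψ_β` (each `φ` times a polynomial) with `∫ y^α ψ_β = δ_{αβ}`
(`exists_dual`).

For general `b` and `ε`, the function
`L(x) = ε^{-n} ∑_β ε^{-|β|} μ_β ψ_β((x - b) / ε)` has moments `μ_β` about the point `b`. Taking for
`μ_β` the prescribed moments re-expanded about `b` by the binomial theorem (`shiftMom`), expanding
back gives the prescribed moments about the origin (`sum_wt_shiftMom`). The binomial coefficients
cost at most a factor `(1 + ‖b‖)^N` (`abs_shiftMom_le`), and the scaling costs `ε^{-n-N}`, so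
`q = (∑_β sup |ψ_β|) (1 + X)^N` works.
-/

open MeasureTheory

/-! ### Re-expansion of moments about another point -/

/-- The monomial `y ↦ y ^ α` in multi-index notation, over any commutative ring. -/
def monom {n : ℕ} {R : Type*} [CommRing R] (α : Fin n → ℕ) (y : Fin n → R) : R :=
  ∏ i, y i ^ α i

/-- The multi-indices `γ ≤ α`. -/
def below {n : ℕ} (α : Fin n → ℕ) : Finset (Fin n → ℕ) :=
  Fintype.piFinset fun i => Finset.range (α i + 1)

/-- The coefficient `binom(α, γ) b ^ (α - γ)` of `y ^ γ` in `(y + b) ^ α`. The subtraction in the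
exponents is truncated, so it is meaningful only for `γ ≤ α`. -/
def wt {n : ℕ} (b : Fin n → ℝ) (α γ : Fin n → ℕ) : ℝ :=
  ∏ i, (b i ^ (α i - γ i) * ((α i).choose (γ i) : ℝ))

/-- The prescribed moments re-expanded around the point `b`: if `m` are the moments of a function
`f`, then `shiftMom b m β` is `∫ (x - b) ^ β f(x) dx`. -/
def shiftMom {n : ℕ} (b : Fin n → ℝ) (m : (Fin n → ℕ) → ℝ) (β : Fin n → ℕ) : ℝ :=
  ∑ δ ∈ below β, wt (-b) β δ * m δ

lemma sum_le_of_mem_below {n : ℕ} {α γ : Fin n → ℕ} (h : γ ∈ below α) :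
    ∑ i, γ i ≤ ∑ i, α i := by
  refine Finset.sum_le_sum fun i _ => ?_
  have := Fintype.mem_piFinset.1 h i
  rw [Finset.mem_range] at this
  omega

/-- The multi-index binomial theorem, over any `ℝ`-algebra. -/
lemma monom_add {n : ℕ} {R : Type*} [CommRing R] [Algebra ℝ R] (α : Fin n → ℕ) (y : Fin n → R)
    (b : Fin n → ℝ) :
    monom α (fun i => y i + algebraMap ℝ R (b i)) =
      ∑ γ ∈ below α, wt b α γ • monom γ y := by
  unfold monom below wt
  simp_rw [add_pow]
  rw [Finset.prod_univ_sum]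
  refine Finset.sum_congr rfl fun γ _ => ?_
  rw [Algebra.smul_def, map_prod, ← Finset.prod_mul_distrib]
  refine Finset.prod_congr rfl fun i _ => ?_
  simp only [map_mul, map_pow, map_natCast]
  ring

/-- Shifting the base point to `b` and back recovers the moments: apply the linear functional
`X ^ δ ↦ m δ` on polynomials to the expansion of `((X - b) + b) ^ α`. -/
lemma sum_wt_shiftMom {n : ℕ} (b : Fin n → ℝ) (m : (Fin n → ℕ) → ℝ) (α : Fin n → ℕ) :
    ∑ γ ∈ below α, wt b α γ * shiftMom b m γ = m α := by
  let Λ : MvPolynomial (Fin n) ℝ →ₗ[ℝ] ℝ :=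
    (MvPolynomial.basisMonomials (Fin n) ℝ).constr ℝ (fun s => m (fun i => s i))
  have hΛ : ∀ δ : Fin n → ℕ, Λ (monom δ MvPolynomial.X) = m δ := by
    intro δ
    have h1 : monom δ (MvPolynomial.X : Fin n → MvPolynomial (Fin n) ℝ) =
        MvPolynomial.basisMonomials (Fin n) ℝ (Finsupp.equivFunOnFinite.symm δ) := by
      rw [MvPolynomial.coe_basisMonomials]
      beta_reduce
      rw [MvPolynomial.monomial_eq, Finsupp.prod_fintype]
      · simp [monom]
      · simp
    rw [h1, Module.Basis.constr_basis]
    rfl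
  have h2 : ∀ γ, Λ (monom γ (fun i => MvPolynomial.X i + algebraMap ℝ _ ((-b) i))) =
      shiftMom b m γ := by
    intro γ
    rw [monom_add, map_sum]
    simp [shiftMom, hΛ]
  have h3 := monom_add α (fun i => (MvPolynomial.X i : MvPolynomial (Fin n) ℝ)
    + algebraMap ℝ _ ((-b) i)) b
  have h4 : (fun i => (MvPolynomial.X i : MvPolynomial (Fin n) ℝ)
    + algebraMap ℝ _ ((-b) i) + algebraMap ℝ _ (b i)) = MvPolynomial.X := by
    funext i
    simp
  rw [h4] at h3
  rw [← hΛ α, h3, map_sum]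
  simp only [map_smul, h2, smul_eq_mul]

lemma abs_shiftMom_le {n N : ℕ} (b : Fin n → ℝ) (m : (Fin n → ℕ) → ℝ) {B : ℝ}
    (hB : ∀ α : Fin n → ℕ, (∑ i, α i) ≤ N → |m α| ≤ B) {β : Fin n → ℕ} (hβ : ∑ i, β i ≤ N) :
    |shiftMom b m β| ≤ (1 + ‖b‖) ^ N * B := by
  have hB0 : 0 ≤ B := (abs_nonneg _).trans (hB 0 (by simp))
  -- The absolute values of the weights sum to `∏ (1 + |b i|) ^ β i`.
  have h1 := monom_add (R := ℝ) β (fun _ => 1) (fun i => |b i|)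
  calc |shiftMom b m β| ≤ ∑ δ ∈ below β, |wt (-b) β δ * m δ| := Finset.abs_sum_le_sum_abs _ _
    _ ≤ ∑ δ ∈ below β, wt (fun i => |b i|) β δ * B := by
        refine Finset.sum_le_sum fun δ hδ => ?_
        have : |wt (-b) β δ| = wt (fun i => |b i|) β δ := by
          simp [wt, Finset.abs_prod, abs_mul, abs_pow]
        rw [abs_mul, this]
        refine mul_le_mul_of_nonneg_left (hB δ ((sum_le_of_mem_below hδ).trans hβ)) ?_
        rw [← this]
        exact abs_nonneg _
    _ = monom β (fun i => 1 + |b i|) * B := by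
        rw [← Finset.sum_mul]
        congr 1
        simpa [monom] using h1.symm
    _ ≤ (1 + ‖b‖) ^ N * B := by
        refine mul_le_mul_of_nonneg_right ?_ hB0
        calc monom β (fun i => 1 + |b i|) ≤ ∏ i, (1 + ‖b‖) ^ β i := by
              refine Finset.prod_le_prod (fun i _ => by positivity) fun i _ => ?_
              have : |b i| ≤ ‖b‖ := norm_le_pi_norm b i
              exact pow_le_pow_left₀ (by positivity) (by simpa using this) _
          _ = (1 + ‖b‖) ^ (∑ i, β i) := Finset.prod_pow_eq_pow_sum _ _ _
          _ ≤ (1 + ‖b‖) ^ N := by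
              refine pow_le_pow_right₀ ?_ hβ
              linarith [norm_nonneg b]

/-! ### Test functions dual to the monomials -/

lemma contDiff_monom {n : ℕ} (α : Fin n → ℕ) :
    ContDiff ℝ (⊤ : ℕ∞) (fun y : Fin n → ℝ => monom α y) := by
  unfold monom
  fun_prop

/-- Distinct monomials are linearly independent on any sup-norm ball around the origin. -/
lemma coeff_eq_zero {n : ℕ} (S : Finset (Fin n → ℕ)) (v : S → ℝ) {r : ℝ} (hr : 0 < r)
    (h : ∀ y ∈ Metric.closedBall (0 : Fin n → ℝ) r, ∑ α, v α * monom α.1 y = 0) : v = 0 := by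
  let p : MvPolynomial (Fin n) ℝ :=
    ∑ α, MvPolynomial.monomial (Finsupp.equivFunOnFinite.symm α.1) (v α)
  have hp : p = 0 := by
    refine MvPolynomial.funext_set (fun _ => Set.Icc (-r) r)
      (fun _ => Set.Icc_infinite (by linarith)) fun x hx => ?_
    have hx' : x ∈ Metric.closedBall (0 : Fin n → ℝ) r := by
      rw [mem_closedBall_zero_iff, pi_norm_le_iff_of_nonneg hr.le]
      exact fun i => abs_le.2 (hx i trivial)
    rw [map_zero, ← h x hx', map_sum]
    refine Finset.sum_congr rfl fun α _ => ?_
    rw [MvPolynomial.eval_monomial, Finsupp.prod_fintype _ _ (by simp)]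
    rfl
  funext α
  have h1 : MvPolynomial.coeff (Finsupp.equivFunOnFinite.symm α.1) p = v α := by
    simp only [p, MvPolynomial.coeff_sum, MvPolynomial.coeff_monomial]
    rw [Finset.sum_eq_single α]
    · simp
    · intro β _ hβ
      rw [if_neg]
      intro h
      exact hβ (Subtype.ext (Finsupp.equivFunOnFinite.symm.injective h))
    · simp
  rw [← h1, hp]
  simp

/-- A family of test functions in the unit ball dual to the monomials with exponents in `S`.
Each is a fixed bump function times a polynomial, whose coefficients come from inverting the Gram
matrix of the monomials in the `L²` space weighted by the bump. -/
lemma exists_dual {n : ℕ} (S : Finset (Fin n → ℕ)) :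
    ∃ ψ : (Fin n → ℕ) → (Fin n → ℝ) → ℝ,
      (∀ β, ContDiff ℝ (⊤ : ℕ∞) (ψ β)) ∧
      (∀ β, tsupport (ψ β) ⊆ Metric.closedBall 0 (1 / 2)) ∧
      ∀ α ∈ S, ∀ β ∈ S, ∫ y, monom α y * ψ β y = if α = β then 1 else 0 := by
  let φ : ContDiffBump (0 : Fin n → ℝ) := ⟨1 / 4, 1 / 2, by norm_num, by norm_num⟩
  have hφ : ContDiff ℝ (⊤ : ℕ∞) (φ : (Fin n → ℝ) → ℝ) := φ.contDiff
  have hint : ∀ f : (Fin n → ℝ) → ℝ, Continuous f → Integrable (fun y => f y * φ y) :=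
    fun f hf => (hf.mul φ.continuous).integrable_of_hasCompactSupport φ.hasCompactSupport.mul_left
  have hmc : ∀ α : Fin n → ℕ, Continuous (fun y : Fin n → ℝ => monom α y) :=
    fun α => (contDiff_monom α).continuous
  let G : Matrix S S ℝ := fun α β => ∫ y, monom α.1 y * monom β.1 y * φ y
  -- Pairing a polynomial with the monomials gives `G` applied to its coefficient vector.
  have hG : ∀ (v : S → ℝ) (α : S),
      ∫ y, monom α.1 y * ((∑ β, v β * monom β.1 y) * φ y) = G.mulVec v α := by
    intro v α
    have : ∀ y, monom α.1 y * ((∑ β, v β * monom β.1 y) * φ y) =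
        ∑ β, monom α.1 y * monom β.1 y * φ y * v β := by
      intro y
      rw [Finset.sum_mul, Finset.mul_sum]
      exact Finset.sum_congr rfl fun β _ => by ring
    simp_rw [this]
    rw [integral_finsetSum]
    · simp_rw [integral_mul_const]
      rfl
    · exact fun β _ => (hint _ ((hmc _).mul (hmc _))).mul_const _
  have hunit : IsUnit G := by
    rw [← Matrix.mulVec_injective_iff_isUnit]
    refine (injective_iff_map_eq_zero G.mulVecLin).2 fun v hv => ?_
    rw [Matrix.mulVecLin_apply] at hv
    let P : (Fin n → ℝ) → ℝ := fun y => ∑ β, v β * monom β.1 y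
    have hP : Continuous P := by
      have := fun β : S => hmc β.1
      fun_prop
    -- The quadratic form of `G` at `v` is `∫ P² φ`, where `P` has coefficients `v`.
    have hQ : ∫ y, P y * P y * φ y = 0 := by
      have h1 : ∀ y, P y * P y * φ y = ∑ α, v α * (monom α.1 y * (P y * φ y)) := by
        intro y
        rw [mul_assoc]
        nth_rw 1 [show P y = ∑ β, v β * monom β.1 y from rfl]
        rw [Finset.sum_mul]
        exact Finset.sum_congr rfl fun β _ => by ring
      simp_rw [h1]
      rw [integral_finsetSum]
      · refine Finset.sum_eq_zero fun α _ => ?_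
        rw [integral_const_mul, hG v α, hv]
        simp
      · intro α _
        refine Integrable.const_mul ?_ _
        simpa only [Pi.mul_apply, mul_assoc] using hint _ ((hmc α.1).mul hP)
    refine coeff_eq_zero S v (r := 1 / 4) (by norm_num) fun y hy => ?_
    have hφy : φ y = 1 := φ.one_of_mem_closedBall hy
    by_contra hne
    have hpos : 0 < ∫ y, P y * P y * φ y := by
      refine Continuous.integral_pos_of_hasCompactSupport_nonneg_nonzero (x := y)
        ((hP.mul hP).mul φ.continuous) φ.hasCompactSupport.mul_left
        (fun z => mul_nonneg (mul_self_nonneg _) φ.nonneg) ?_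
      rw [hφy, mul_one]
      exact mul_ne_zero hne hne
    exact hpos.ne' hQ
  refine ⟨fun β y => (∑ γ : S, (if h : β ∈ S then G⁻¹ γ ⟨β, h⟩ else 0) * monom γ.1 y) * φ y,
    fun β => ?_, fun β => ?_, fun α hα β hβ => ?_⟩
  · have := fun γ : S => contDiff_monom γ.1
    fun_prop
  · refine (tsupport_mul_subset_right).trans ?_
    rw [φ.tsupport_eq]
  · simp only [dif_pos hβ]
    rw [hG (fun γ => G⁻¹ γ ⟨β, hβ⟩) ⟨α, hα⟩]
    have h1 : G * G⁻¹ = 1 := Matrix.mul_nonsing_inv G ((Matrix.isUnit_iff_isUnit_det G).1 hunit)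
    have h2 := congrFun (congrFun h1 ⟨α, hα⟩) ⟨β, hβ⟩
    rw [Matrix.mul_apply, Matrix.one_apply] at h2
    simpa only [Matrix.mulVec, dotProduct, Subtype.mk.injEq] using h2

/-! ### Translation and scaling -/

lemma integral_rescale {n : ℕ} {ε : ℝ} (hε : 0 < ε) (b : Fin n → ℝ) (g : (Fin n → ℝ) → ℝ) :
    ∫ x, (ε ^ n)⁻¹ * g (ε⁻¹ • (x - b)) = ∫ y, g y := by
  rw [integral_const_mul, integral_sub_right_eq_self (fun x => g (ε⁻¹ • x)) b,
    Measure.integral_comp_smul]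
  have : 0 < ε ^ n := by positivity
  simp only [Module.finrank_fin_fun, inv_pow, inv_inv, abs_of_pos this, smul_eq_mul]
  field_simp

/-- Moment-reproduction lemma: for every `N` and dimension `n`, there is a polynomial
`p_N` of degree ≤ `N` such that for all `ε ∈ (0,1]`, `x̄ ∈ ℝ^n` and prescribed moments
`m = (m_α)_{|α| ≤ N}`, there exists `L ∈ C_c^∞(B(x̄,ε))` with
`∫ x^α L = m_α` for `|α| ≤ N` and `‖L‖_∞ ≤ p_N(‖x̄‖) ε^{-(n+N)} max_{|α|≤N} |m_α|`. -/
theorem stmt17 (n N : ℕ) (hn : 1 ≤ n) :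
    ∃ q : Polynomial ℝ, q.natDegree ≤ N ∧
      ∀ (ε : ℝ), 0 < ε → ε ≤ 1 →
        ∀ (xb : Fin n → ℝ) (m : (Fin n → ℕ) → ℝ),
          ∃ L : (Fin n → ℝ) → ℝ,
            ContDiff ℝ (⊤ : ℕ∞) L ∧
            HasCompactSupport L ∧
            tsupport L ⊆ Metric.ball xb ε ∧
            (∀ α : Fin n → ℕ, (∑ i, α i) ≤ N →
              (∫ x : Fin n → ℝ, (∏ i, x i ^ α i) * L x) = m α) ∧
            ∀ B : ℝ, (∀ α : Fin n → ℕ, (∑ i, α i) ≤ N → |m α| ≤ B) →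
              ∀ x, |L x| ≤ q.eval ‖xb‖ / ε ^ (n + N) * B := by
  classical
  let S : Finset (Fin n → ℕ) :=
    (Fintype.piFinset fun _ => Finset.range (N + 1)).filter fun α => ∑ i, α i ≤ N
  have hS : ∀ α, α ∈ S ↔ ∑ i, α i ≤ N := by
    intro α
    simp only [S, Finset.mem_filter, Fintype.mem_piFinset, Finset.mem_range, and_iff_right_iff_imp]
    intro h i
    have := Finset.single_le_sum (f := α) (fun _ _ => Nat.zero_le _) (Finset.mem_univ i)
    omega
  obtain ⟨ψ, hψs, hψt, hψ⟩ := exists_dual S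
  have hψc : ∀ β, HasCompactSupport (ψ β) := fun β =>
    (isCompact_closedBall _ _).of_isClosed_subset (isClosed_tsupport _) (hψt β)
  choose M hM using fun β => (hψc β).exists_bound_of_continuous (hψs β).continuous
  refine ⟨Polynomial.C (∑ β ∈ S, M β) * (1 + Polynomial.X) ^ N, ?_, ?_⟩
  · refine (Polynomial.natDegree_C_mul_le _ _).trans ?_
    refine (Polynomial.natDegree_pow_le).trans ?_
    have : (1 + Polynomial.X : Polynomial ℝ).natDegree ≤ 1 := by
      rw [add_comm, ← Polynomial.C_1, Polynomial.natDegree_X_add_C]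
    nlinarith
  intro ε hε hε1 b m
  -- `c β` is the prescribed moment of exponent `β` in the variable `y = (x - b) / ε`, and `F` is
  -- the test function in the unit ball having these moments.
  let c : (Fin n → ℕ) → ℝ := fun β => (ε ^ (∑ i, β i))⁻¹ * shiftMom b m β
  let F : (Fin n → ℝ) → ℝ := fun y => ∑ β ∈ S, c β * ψ β y
  let L : (Fin n → ℝ) → ℝ := fun x => (ε ^ n)⁻¹ * F (ε⁻¹ • (x - b))
  have hF : ContDiff ℝ (⊤ : ℕ∞) F := by fun_prop
  have hLt : tsupport L ⊆ Metric.closedBall b (ε / 2) := by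
    refine closure_minimal (fun x hx => ?_) Metric.isClosed_closedBall
    have h1 : F (ε⁻¹ • (x - b)) ≠ 0 := right_ne_zero_of_mul hx
    obtain ⟨β, _, h2⟩ := Finset.exists_ne_zero_of_sum_ne_zero h1
    have h3 := hψt β (subset_tsupport _ (right_ne_zero_of_mul h2))
    rw [mem_closedBall_zero_iff, norm_smul, norm_inv, Real.norm_of_nonneg hε.le] at h3
    rw [mem_closedBall_iff_norm]
    rw [inv_mul_le_iff₀ hε] at h3
    linarith
  refine ⟨L, ?_, ?_, ?_, ?_, ?_⟩
  · fun_prop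
  · exact (isCompact_closedBall _ _).of_isClosed_subset (isClosed_tsupport _) hLt
  · exact hLt.trans (Metric.closedBall_subset_ball (by linarith))
  · intro α hα
    have hmono : ∀ y : Fin n → ℝ, monom α (fun i => ε * y i + b i) =
        ∑ γ ∈ below α, wt b α γ * (ε ^ (∑ i, γ i) * monom γ y) := by
      intro y
      have := monom_add α (fun i => ε * y i) b
      simp only [Algebra.algebraMap_self, RingHom.id_apply, smul_eq_mul] at this
      rw [this]
      refine Finset.sum_congr rfl fun γ _ => ?_
      simp only [monom, mul_pow, Finset.prod_mul_distrib, Finset.prod_pow_eq_pow_sum]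
    have hFint : ∀ γ β, Integrable fun y => monom γ y * ψ β y := fun γ β =>
      ((contDiff_monom γ).continuous.mul (hψs β).continuous).integrable_of_hasCompactSupport
        (hψc β).mul_left
    have hFmom : ∀ γ ∈ S, ∫ y, monom γ y * F y = c γ := by
      intro γ hγ
      have : ∀ y, monom γ y * F y = ∑ β ∈ S, c β * (monom γ y * ψ β y) := by
        intro y
        simp only [F, Finset.mul_sum]
        exact Finset.sum_congr rfl fun β _ => by ring
      simp_rw [this]
      rw [integral_finsetSum _ fun β _ => (hFint γ β).const_mul _]
      simp_rw [integral_const_mul]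
      rw [Finset.sum_congr rfl fun β hβ => by rw [hψ γ hγ β hβ]]
      simp [hγ]
    have hFint' : ∀ γ, Integrable fun y => monom γ y * F y := by
      intro γ
      have : (fun y => monom γ y * F y) = fun y => ∑ β ∈ S, c β * (monom γ y * ψ β y) := by
        funext y
        simp only [F, Finset.mul_sum]
        exact Finset.sum_congr rfl fun β _ => by ring
      rw [this]
      exact integrable_finsetSum _ fun β _ => (hFint γ β).const_mul _
    calc ∫ x : Fin n → ℝ, (∏ i, x i ^ α i) * L x
        = ∫ x, (ε ^ n)⁻¹ * (fun y => monom α (fun i => ε * y i + b i) * F y) (ε⁻¹ • (x - b)) := by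
          refine integral_congr_ae (Filter.Eventually.of_forall fun x => ?_)
          have : (fun i => ε * (ε⁻¹ • (x - b)) i + b i) = x := by
            funext i
            simp [hε.ne']
          simp only [L]
          rw [this, monom]
          ring
      _ = ∫ y, monom α (fun i => ε * y i + b i) * F y := integral_rescale hε b
            (fun y => monom α (fun i => ε * y i + b i) * F y)
      _ = ∫ y, ∑ γ ∈ below α, wt b α γ * ε ^ (∑ i, γ i) * (monom γ y * F y) := by
          simp_rw [hmono, Finset.sum_mul]
          congr 1
          funext y
          exact Finset.sum_congr rfl fun γ _ => by ring
      _ = ∑ γ ∈ below α, wt b α γ * shiftMom b m γ := by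
          rw [integral_finsetSum _ fun γ _ => (hFint' γ).const_mul _]
          refine Finset.sum_congr rfl fun γ hγ => ?_
          rw [integral_const_mul, hFmom γ ((hS γ).2 ((sum_le_of_mem_below hγ).trans hα))]
          simp only [c]
          field_simp
      _ = m α := sum_wt_shiftMom b m α
  · intro B hB x
    have hB0 : 0 ≤ B := (abs_nonneg _).trans (hB 0 (by simp))
    have hc : ∀ β ∈ S, |c β| ≤ (ε ^ N)⁻¹ * ((1 + ‖b‖) ^ N * B) := by
      intro β hβ
      rw [hS] at hβ
      rw [abs_mul, abs_of_pos (by positivity)]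
      refine mul_le_mul ?_ (abs_shiftMom_le b m hB hβ) (abs_nonneg _) (by positivity)
      exact inv_anti₀ (by positivity) (pow_le_pow_of_le_one hε.le hε1 hβ)
    have hFb : ∀ y, |F y| ≤ ∑ β ∈ S, (ε ^ N)⁻¹ * ((1 + ‖b‖) ^ N * B) * M β := by
      intro y
      refine (Finset.abs_sum_le_sum_abs _ _).trans (Finset.sum_le_sum fun β hβ => ?_)
      rw [abs_mul]
      exact mul_le_mul (hc β hβ) (hM β y) (abs_nonneg _) (by positivity)
    calc |L x| = (ε ^ n)⁻¹ * |F (ε⁻¹ • (x - b))| := by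
          rw [abs_mul, abs_of_pos (by positivity)]
      _ ≤ (ε ^ n)⁻¹ * ∑ β ∈ S, (ε ^ N)⁻¹ * ((1 + ‖b‖) ^ N * B) * M β :=
          mul_le_mul_of_nonneg_left (hFb _) (by positivity)
      _ = _ := by
          rw [← Finset.mul_sum]
          simp only [Polynomial.eval_mul, Polynomial.eval_C, Polynomial.eval_pow,
            Polynomial.eval_add, Polynomial.eval_one, Polynomial.eval_X, pow_add]
          field_simp
end
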